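/- Let Σ^−_{h_X,ν} = {x ∈ Σ : the lower local dimension of ν at x is strictly less than h_X}. If ν(Σ^−_{h_X,ν}) > 0 then E_ℙ(Z) < 1, and if ν(Σ^−_{h_X,ν}) = 1 then E_ℙ(Z) = 0. -/

import Mathlib

open MeasureTheory ProbabilityTheory Filter Set
open scoped ENNReal

noncomputable section

/-- The one-sided symbolic space over the alphabet `{0, …, b-1}`. -/
abbrev SymbSpace (b : ℕ) : Type := ℕ → Fin b

/-- The cylinder `[w]` of sequences starting with the finite word `w`. -/
def cylinder {b : ℕ} (w : List (Fin b)) : Set (SymbSpace b) :=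
  {x | ∀ i : Fin w.length, x i = w.get i}

/-- The prefix `x|_n` of `x` of length `n`, as a finite word. -/
def wordPrefix {b : ℕ} (x : SymbSpace b) (n : ℕ) : List (Fin b) :=
  List.ofFn (fun i : Fin n => x i)

/-- `Y_w = X_{w_1} X_{w_1w_2} ⋯ X_{w_1⋯w_n}`. -/
def cascadeY {b : ℕ} {Ω : Type*} (X : List (Fin b) → Ω → ℝ) (w : List (Fin b)) (ω : Ω) : ℝ :=
  ∏ k ∈ Finset.range w.length, X (w.take (k + 1)) ω

/-- The total mass `Z_n = ∑_{|u| = n} Y_u ν([u])`. -/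
def cascadeZ {b : ℕ} {Ω : Type*} (X : List (Fin b) → Ω → ℝ) (ν : Measure (SymbSpace b))
    (n : ℕ) (ω : Ω) : ℝ :=
  ∑ u : Fin n → Fin b, cascadeY X (List.ofFn u) ω * (ν (cylinder (List.ofFn u))).toReal

/-- `Z = limsup_n Z_n`. -/
def cascadeZlim {b : ℕ} {Ω : Type*} (X : List (Fin b) → Ω → ℝ) (ν : Measure (SymbSpace b))
    (ω : Ω) : ℝ :=
  Filter.limsup (fun n => cascadeZ X ν n ω) atTop

/-- Assumption (M1): the weights `X_u`, `u` a nonempty finite word, are i.i.d. with common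
law that of the nonnegative random variable `X₀` of expectation 1. -/
structure CascadeM1 {b : ℕ} {Ω : Type*} [MeasurableSpace Ω] (P : Measure Ω)
    (X : List (Fin b) → Ω → ℝ) (X₀ : Ω → ℝ) : Prop where
  meas : ∀ w, Measurable (X w)
  nonneg : ∀ w ω, 0 ≤ X w ω
  meas₀ : Measurable X₀
  nonneg₀ : ∀ ω, 0 ≤ X₀ ω
  mean₀ : ∫ ω, X₀ ω ∂P = 1
  indep : iIndepFun
    (fun w : {w : List (Fin b) // w ≠ []} => X w.1) P
  ident : ∀ w : List (Fin b), w ≠ [] → IdentDistrib (X w) X₀ P P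

/-- `h_X = E(X log X) ∈ [0, ∞]` (well defined since `x log x ≥ -e⁻¹` and, by convexity,
`E(X log X) ≥ E(X) log E(X) = 0`), encoded as an extended nonnegative real. -/
def entropyX {Ω : Type*} [MeasurableSpace Ω] (P : Measure Ω) (X₀ : Ω → ℝ) : ℝ≥0∞ :=
  (∫⁻ ω, ENNReal.ofReal (X₀ ω * Real.log (X₀ ω)) ∂P) -
    (∫⁻ ω, ENNReal.ofReal (-(X₀ ω * Real.log (X₀ ω))) ∂P)

/-- The lower local dimension `liminf_n (-log ν([x|_n]) / n)` of `ν` at `x`, valued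
in `[0, ∞]`. -/
def lowerLocalDim {b : ℕ} (ν : Measure (SymbSpace b)) (x : SymbSpace b) : ℝ≥0∞ :=
  Filter.liminf
    (fun n : ℕ => ENNReal.ofReal (-Real.log ((ν (cylinder (wordPrefix x n))).toReal) / n))
    atTop

/-- The upper local dimension `limsup_n (-log ν([x|_n]) / n)` of `ν` at `x`. -/
def upperLocalDim {b : ℕ} (ν : Measure (SymbSpace b)) (x : SymbSpace b) : ℝ≥0∞ :=
  Filter.limsup
    (fun n : ℕ => ENNReal.ofReal (-Real.log ((ν (cylinder (wordPrefix x n))).toReal) / n))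
    atTop

/-- The lower Hausdorff dimension of `ν`: the `ν`-essential infimum of the lower local
dimension. -/
def lowerHausdorffDim {b : ℕ} (ν : Measure (SymbSpace b)) : ℝ≥0∞ :=
  essInf (lowerLocalDim ν) ν

/-- The upper Hausdorff dimension of `ν`: the `ν`-essential supremum of the lower local
dimension. -/
def upperHausdorffDim {b : ℕ} (ν : Measure (SymbSpace b)) : ℝ≥0∞ :=
  essSup (lowerLocalDim ν) ν

/-- The upper packing dimension of `ν`: the `ν`-essential supremum of the upper local
dimension. -/
def upperPackingDim {b : ℕ} (ν : Measure (SymbSpace b)) : ℝ≥0∞ :=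
  essSup (upperLocalDim ν) ν


section CascadeAux

set_option linter.unusedSectionVars false

open Topology

variable {b : ℕ} {Ω : Type*} [mΩ : MeasurableSpace Ω] {P : Measure Ω}
  {X : List (Fin b) → Ω → ℝ} {X₀ : Ω → ℝ}

lemma wordPrefix_length (x : SymbSpace b) (n : ℕ) : (wordPrefix x n).length = n := by
  simp [wordPrefix]

lemma wordPrefix_take (x : SymbSpace b) {k n : ℕ} (h : k ≤ n) :
    (wordPrefix x n).take k = wordPrefix x k := by
  apply List.ext_getElem
  · simp [wordPrefix, h]
  · intro i h1 h2
    simp [wordPrefix]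

lemma cascadeY_prefix (x : SymbSpace b) (n : ℕ) (ω : Ω) :
    cascadeY X (wordPrefix x n) ω = ∏ k ∈ Finset.range n, X (wordPrefix x (k + 1)) ω := by
  unfold cascadeY
  rw [wordPrefix_length]
  refine Finset.prod_congr rfl fun k hk => ?_
  rw [wordPrefix_take x (by simpa using hk)]

lemma cascadeY_prefix_succ (x : SymbSpace b) (n : ℕ) (ω : Ω) :
    cascadeY X (wordPrefix x (n + 1)) ω
      = cascadeY X (wordPrefix x n) ω * X (wordPrefix x (n + 1)) ω := by
  rw [cascadeY_prefix, cascadeY_prefix, Finset.prod_range_succ]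

lemma cascadeY_nonneg (hM : CascadeM1 P X X₀) (w : List (Fin b)) (ω : Ω) :
    0 ≤ cascadeY X w ω := Finset.prod_nonneg fun _ _ => hM.nonneg _ _

lemma cascadeZ_nonneg (hM : CascadeM1 P X X₀) (m : Measure (SymbSpace b)) (n : ℕ) (ω : Ω) :
    0 ≤ cascadeZ X m n ω :=
  Finset.sum_nonneg fun _ _ => mul_nonneg (cascadeY_nonneg hM _ _) ENNReal.toReal_nonneg

/-- restriction to the first `n` letters -/
def firstLetters (n : ℕ) (x : SymbSpace b) : Fin n → Fin b := fun i => x i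

lemma measurable_firstLetters (n : ℕ) : Measurable (firstLetters (b := b) n) := by
  unfold firstLetters
  fun_prop

lemma cylinder_ofFn {n : ℕ} (u : Fin n → Fin b) :
    cylinder (List.ofFn u) = firstLetters n ⁻¹' {u} := by
  ext x
  simp only [_root_.cylinder, mem_ofPred_eq, firstLetters, mem_preimage, mem_singleton_iff, funext_iff]
  constructor
  · intro h i
    have := h ⟨i, by simp⟩
    simpa using this
  · intro h i
    have := h ⟨i, by simpa using i.2⟩
    simpa using this

lemma measurable_comp_prefix {β : Type*} [MeasurableSpace β] (F : List (Fin b) → β) (n : ℕ) :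
    Measurable fun x : SymbSpace b => F (wordPrefix x n) :=
  (measurable_of_finite (fun u : Fin n → Fin b => F (List.ofFn u))).comp
    (measurable_firstLetters n)

lemma sum_cylinder (m : Measure (SymbSpace b)) (n : ℕ) (F : List (Fin b) → ℝ≥0∞) :
    ∑ u : Fin n → Fin b, F (List.ofFn u) * m (cylinder (List.ofFn u))
      = ∫⁻ x, F (wordPrefix x n) ∂m := by
  have h1 : ∫⁻ x, F (wordPrefix x n) ∂m
      = ∫⁻ u : Fin n → Fin b, F (List.ofFn u) ∂(m.map (firstLetters n)) := by
    rw [lintegral_map (measurable_of_finite _) (measurable_firstLetters n)]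
    rfl
  rw [h1, lintegral_fintype]
  refine Finset.sum_congr rfl fun u _ => ?_
  rw [Measure.map_apply (measurable_firstLetters n) (measurableSet_singleton u), cylinder_ofFn]

lemma ofReal_cascadeZ (hM : CascadeM1 P X X₀) (m : Measure (SymbSpace b)) [IsFiniteMeasure m]
    (n : ℕ) (ω : Ω) :
    ENNReal.ofReal (cascadeZ X m n ω)
      = ∫⁻ x, ENNReal.ofReal (cascadeY X (wordPrefix x n) ω) ∂m := by
  rw [← sum_cylinder m n (fun w => ENNReal.ofReal (cascadeY X w ω)), cascadeZ,
    ENNReal.ofReal_sum_of_nonneg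
      (fun _ _ => mul_nonneg (cascadeY_nonneg hM _ _) ENNReal.toReal_nonneg)]
  refine Finset.sum_congr rfl fun u _ => ?_
  rw [ENNReal.ofReal_mul (cascadeY_nonneg hM _ _), ENNReal.ofReal_toReal (measure_ne_top _ _)]

/-- The filtration generated by the weights of length at most `n`. -/
def cascFilt (hM : CascadeM1 P X X₀) : Filtration ℕ mΩ where
  seq n := ⨆ w ∈ {w : {w : List (Fin b) // w ≠ []} | w.1.length ≤ n},
    MeasurableSpace.comap (X w.1) inferInstance
  mono' := by
    intro i j hij
    refine iSup₂_le fun w hw => ?_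
    exact le_iSup₂_of_le w (le_trans hw hij) le_rfl
  le' := by
    intro i
    exact iSup₂_le fun w hw => (hM.meas w.1).comap_le

lemma measurable_X_filt (hM : CascadeM1 P X X₀) {n : ℕ} {w : List (Fin b)} (hw : w ≠ [])
    (hn : w.length ≤ n) : Measurable[cascFilt hM n] (X w) := by
  rw [measurable_iff_comap_le]
  exact le_iSup₂_of_le (f := fun (w : {w : List (Fin b) // w ≠ []})
    (_ : w ∈ {w : {w : List (Fin b) // w ≠ []} | w.1.length ≤ n}) =>
    MeasurableSpace.comap (X w.1) inferInstance) ⟨w, hw⟩ hn le_rfl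

lemma measurable_Y_filt (hM : CascadeM1 P X X₀) {n : ℕ} {w : List (Fin b)}
    (hn : w.length ≤ n) : Measurable[cascFilt hM n] (cascadeY X w) := by
  unfold cascadeY
  refine Finset.measurable_prod _ fun k hk => ?_
  have hk' : k < w.length := by simpa using hk
  refine measurable_X_filt hM ?_ ?_
  · intro h
    have := congrArg List.length h
    simp at this
    subst this
    simp at hk'
  · simp; omega

lemma measurable_Y (hM : CascadeM1 P X X₀) (w : List (Fin b)) : Measurable (cascadeY X w) :=
  (measurable_Y_filt hM le_rfl).mono ((cascFilt hM).le _) le_rfl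

lemma measurable_Z_filt (hM : CascadeM1 P X X₀) (m : Measure (SymbSpace b)) (n : ℕ) :
    Measurable[cascFilt hM n] (cascadeZ X m n) := by
  unfold cascadeZ
  refine Finset.measurable_sum _ fun u _ => ?_
  exact (measurable_Y_filt hM (by simp)).mul_const _

lemma measurable_Z (hM : CascadeM1 P X X₀) (m : Measure (SymbSpace b)) (n : ℕ) :
    Measurable (cascadeZ X m n) :=
  (measurable_Z_filt hM m n).mono ((cascFilt hM).le _) le_rfl

lemma lintegral_indep (hM : CascadeM1 P X X₀) {n : ℕ} {w : List (Fin b)}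
    (hw : w.length = n + 1) {f : Ω → ℝ≥0∞} (hf : Measurable[cascFilt hM n] f)
    {g : ℝ → ℝ≥0∞} (hg : Measurable g) :
    ∫⁻ ω, f ω * g (X w ω) ∂P = (∫⁻ ω, f ω ∂P) * ∫⁻ ω, g (X₀ ω) ∂P := by
  have hne : w ≠ [] := by rintro rfl; simp at hw
  have h1 : Indep (cascFilt hM n)
      (⨆ v ∈ ({⟨w, hne⟩} : Set {w : List (Fin b) // w ≠ []}),
        MeasurableSpace.comap (X v.1) inferInstance) P := by
    have hi : iIndep (fun v : {w : List (Fin b) // w ≠ []} =>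
        MeasurableSpace.comap (X v.1) inferInstance) P := hM.indep.iIndep
    refine indep_iSup_of_disjoint (m := fun v : {w : List (Fin b) // w ≠ []} =>
        MeasurableSpace.comap (X v.1) inferInstance) (fun i => (hM.meas i.1).comap_le) hi
      (S := {w : {w : List (Fin b) // w ≠ []} | w.1.length ≤ n}) ?_
    rw [Set.disjoint_singleton_right]
    simp [hw]
  simp only [mem_singleton_iff, iSup_iSup_eq_left] at h1
  refine (lintegral_mul_eq_lintegral_mul_lintegral_of_independent_measurableSpace
    ((cascFilt hM).le n) (hM.meas w).comap_le h1 hf (hg.comp (comap_measurable _))).trans ?_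
  congr 1
  exact ((hM.ident w hne).comp hg).lintegral_eq

lemma integrable_X₀ (hM : CascadeM1 P X X₀) : Integrable X₀ P := by
  by_contra h
  have := hM.mean₀
  rw [integral_undef h] at this
  simp at this

lemma lintegral_X₀ (hM : CascadeM1 P X X₀) : ∫⁻ ω, ENNReal.ofReal (X₀ ω) ∂P = 1 := by
  rw [← ofReal_integral_eq_lintegral_ofReal (integrable_X₀ hM)
    (Eventually.of_forall hM.nonneg₀), hM.mean₀, ENNReal.ofReal_one]

lemma setLIntegral_Y (hM : CascadeM1 P X X₀) (x : SymbSpace b) {n N : ℕ} (hnN : n ≤ N)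
    {s : Set Ω} (hs : MeasurableSet[cascFilt hM n] s) :
    ∫⁻ ω in s, ENNReal.ofReal (cascadeY X (wordPrefix x N) ω) ∂P
      = ∫⁻ ω in s, ENNReal.ofReal (cascadeY X (wordPrefix x n) ω) ∂P := by
  induction N, hnN using Nat.le_induction with
  | base => rfl
  | succ N hN ih =>
    rw [← ih]
    have hsN : MeasurableSet[cascFilt hM N] s := (cascFilt hM).mono hN s hs
    have hs' : MeasurableSet s := (cascFilt hM).le _ s hs
    rw [← lintegral_indicator hs', ← lintegral_indicator hs']
    have hf : Measurable[cascFilt hM N]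
        (s.indicator fun ω => ENNReal.ofReal (cascadeY X (wordPrefix x N) ω)) := by
      refine Measurable.indicator ?_ hsN
      exact ENNReal.measurable_ofReal.comp (measurable_Y_filt hM (wordPrefix_length x N).le)
    have := lintegral_indep hM (wordPrefix_length x (N + 1)) hf ENNReal.measurable_ofReal
    rw [lintegral_X₀ hM, mul_one] at this
    rw [← this]
    refine lintegral_congr fun ω => ?_
    by_cases hω : ω ∈ s
    · simp only [indicator_of_mem hω]
      rw [cascadeY_prefix_succ, ENNReal.ofReal_mul (cascadeY_nonneg hM _ _)]
    · simp [indicator_of_notMem hω]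

lemma lintegral_Y_pow (hM : CascadeM1 P X X₀) [IsProbabilityMeasure P] (x : SymbSpace b)
    (t : ℝ) (n : ℕ) :
    ∫⁻ ω, ENNReal.ofReal (cascadeY X (wordPrefix x n) ω ^ t) ∂P
      = (∫⁻ ω, ENNReal.ofReal (X₀ ω ^ t) ∂P) ^ n := by
  induction n with
  | zero => simp [cascadeY_prefix]
  | succ n ih =>
    have hf : Measurable[cascFilt hM n]
        (fun ω => ENNReal.ofReal (cascadeY X (wordPrefix x n) ω ^ t)) :=
      ENNReal.measurable_ofReal.comp
        ((measurable_Y_filt hM (wordPrefix_length x n).le).pow_const t)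
    have := lintegral_indep hM (wordPrefix_length x (n + 1)) hf
      (g := fun y => ENNReal.ofReal (y ^ t)) (by fun_prop)
    rw [pow_succ, ← ih, ← this]
    refine lintegral_congr fun ω => ?_
    rw [cascadeY_prefix_succ, Real.mul_rpow (cascadeY_nonneg hM _ _) (hM.nonneg _ _),
      ENNReal.ofReal_mul (Real.rpow_nonneg (cascadeY_nonneg hM _ _) _)]

lemma lintegral_Y (hM : CascadeM1 P X X₀) [IsProbabilityMeasure P] (x : SymbSpace b) (n : ℕ) :
    ∫⁻ ω, ENNReal.ofReal (cascadeY X (wordPrefix x n) ω) ∂P = 1 := by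
  have := lintegral_Y_pow hM x 1 n
  simpa [lintegral_X₀ hM] using this

lemma measurable_prefix_prod (G : List (Fin b) → Ω → ℝ≥0∞) (hG : ∀ w, Measurable (G w))
    (n : ℕ) : Measurable (fun p : Ω × SymbSpace b => G (wordPrefix p.2 n) p.1) := by
  have h : Measurable (fun p : Ω × (Fin n → Fin b) => G (List.ofFn p.2) p.1) :=
    measurable_from_prod_countable_left
      (f := fun p : Ω × (Fin n → Fin b) => G (List.ofFn p.2) p.1) fun u => hG (List.ofFn u)
  have h2 : Measurable (fun p : Ω × SymbSpace b => (p.1, firstLetters n p.2)) :=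
    measurable_fst.prodMk ((measurable_firstLetters n).comp measurable_snd)
  exact h.comp h2

lemma measurable_uncurry_Y (hM : CascadeM1 P X X₀) (n : ℕ) :
    Measurable (Function.uncurry fun (ω : Ω) (x : SymbSpace b) =>
      ENNReal.ofReal (cascadeY X (wordPrefix x n) ω)) :=
  measurable_prefix_prod (fun w ω => ENNReal.ofReal (cascadeY X w ω))
    (fun w => ENNReal.measurable_ofReal.comp (measurable_Y hM w)) n

lemma setLIntegral_Z (hM : CascadeM1 P X X₀) [IsProbabilityMeasure P]
    (m : Measure (SymbSpace b)) [IsFiniteMeasure m] (n : ℕ) (s : Set Ω) :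
    ∫⁻ ω in s, ENNReal.ofReal (cascadeZ X m n ω) ∂P
      = ∫⁻ x, ∫⁻ ω in s, ENNReal.ofReal (cascadeY X (wordPrefix x n) ω) ∂P ∂m := by
  simp_rw [ofReal_cascadeZ hM]
  exact lintegral_lintegral_swap (measurable_uncurry_Y hM n).aemeasurable

lemma lintegral_Z (hM : CascadeM1 P X X₀) [IsProbabilityMeasure P]
    (m : Measure (SymbSpace b)) [IsFiniteMeasure m] (n : ℕ) :
    ∫⁻ ω, ENNReal.ofReal (cascadeZ X m n ω) ∂P = m univ := by
  have := setLIntegral_Z hM m n univ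
  simp only [Measure.restrict_univ, lintegral_Y hM, lintegral_one] at this
  exact this

lemma martingale_Z (hM : CascadeM1 P X X₀) [IsProbabilityMeasure P]
    (m : Measure (SymbSpace b)) [IsFiniteMeasure m] :
    Martingale (cascadeZ X m) (cascFilt hM) P := by
  refine martingale_of_setIntegral_eq_succ
    (fun n => (measurable_Z_filt hM m n).stronglyMeasurable) (fun n => ?_) ?_
  · refine ⟨(measurable_Z hM m n).aestronglyMeasurable, ?_⟩
    rw [hasFiniteIntegral_iff_ofReal (Eventually.of_forall (cascadeZ_nonneg hM m n)),
      lintegral_Z hM]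
    exact measure_lt_top _ _
  · intro n s hs
    rw [integral_eq_lintegral_of_nonneg_ae (Eventually.of_forall (cascadeZ_nonneg hM m n))
        (measurable_Z hM m n).aestronglyMeasurable,
      integral_eq_lintegral_of_nonneg_ae (Eventually.of_forall (cascadeZ_nonneg hM m (n + 1)))
        (measurable_Z hM m (n + 1)).aestronglyMeasurable, setLIntegral_Z hM, setLIntegral_Z hM]
    congr 1
    exact lintegral_congr fun x => (setLIntegral_Y hM x (Nat.le_succ n) hs).symm

lemma ae_tendsto_Z (hM : CascadeM1 P X X₀) [IsProbabilityMeasure P]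
    (m : Measure (SymbSpace b)) [IsFiniteMeasure m] :
    ∀ᵐ ω ∂P, ∃ c, Tendsto (fun n => cascadeZ X m n ω) atTop (𝓝 c) := by
  refine (martingale_Z hM m).submartingale.exists_ae_tendsto_of_bdd
    (R := (m univ).toNNReal) fun n => ?_
  rw [eLpNorm_one_eq_lintegral_enorm, ENNReal.coe_toNNReal (measure_ne_top _ _),
    ← lintegral_Z hM m n]
  refine lintegral_mono fun ω => ?_
  rw [Real.enorm_of_nonneg (cascadeZ_nonneg hM m n ω)]

lemma rpow_sub_bound {y s : ℝ} (hy : 0 ≤ y) (hs0 : 0 < s) (hs1 : s < 1) :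
    0 ≤ s⁻¹ * (y - y ^ (1 - s)) + 1 := by
  have h := Real.geom_mean_le_arith_mean2_weighted (w₁ := 1 - s) (w₂ := s) (p₁ := y) (p₂ := 1)
    (by linarith) hs0.le hy zero_le_one (by ring)
  rw [Real.one_rpow, mul_one, mul_one] at h
  have h2 : -s ≤ y - y ^ (1 - s) := by nlinarith
  have h3 : s⁻¹ * (-s) ≤ s⁻¹ * (y - y ^ (1 - s)) :=
    mul_le_mul_of_nonneg_left h2 (inv_nonneg.2 hs0.le)
  have h4 : s⁻¹ * (-s) = -1 := by field_simp
  linarith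

lemma rpow_sub_tendsto {y : ℝ} (hy : 0 ≤ y) :
    Tendsto (fun s : ℝ => s⁻¹ * (y - y ^ (1 - s))) (𝓝[≠] 0) (𝓝 (y * Real.log y)) := by
  rcases hy.eq_or_lt with rfl | hy
  · have : ∀ᶠ s : ℝ in 𝓝[≠] 0, s⁻¹ * ((0 : ℝ) - 0 ^ (1 - s)) = 0 := by
      have h1 : ∀ᶠ s : ℝ in 𝓝 0, s < 1 := eventually_lt_nhds one_pos
      filter_upwards [nhdsWithin_le_nhds h1] with s hs
      rw [Real.zero_rpow (by linarith)]
      simp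
    simp only [zero_mul]
    exact Tendsto.congr' (this.mono fun s hs => hs.symm) tendsto_const_nhds
  · have h1 : HasDerivAt (fun s : ℝ => -(y ^ (1 - s))) (y * Real.log y) 0 := by
      have h2 : HasDerivAt (fun s : ℝ => 1 - s) (-1) 0 := by
        simpa using (hasDerivAt_id (0 : ℝ)).const_sub 1
      have h4 := (h2.const_rpow hy).fun_neg
      refine h4.congr_deriv ?_
      rw [sub_zero, Real.rpow_one]
      ring
    have h3 := hasDerivAt_iff_tendsto_slope_zero.1 h1
    refine h3.congr fun s => ?_
    rw [zero_add, sub_zero, Real.rpow_one, smul_eq_mul]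
    ring

lemma exists_exponent (hM : CascadeM1 P X X₀) [IsProbabilityMeasure P] {a : NNReal}
    (ha : (a : ℝ≥0∞) < entropyX P X₀) :
    ∃ s : ℝ, 0 < s ∧ s < 1 ∧
      ∫⁻ ω, ENNReal.ofReal (X₀ ω ^ (1 - s)) ∂P < ENNReal.ofReal (Real.exp (-(a * s))) := by
  have hmX := hM.meas₀
  have hlb : ∀ ω, -1 ≤ X₀ ω * Real.log (X₀ ω) := by
    intro ω
    have := Real.self_sub_one_le_mul_log (hM.nonneg₀ ω)
    have := hM.nonneg₀ ω
    linarith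
  -- the limit integral
  have hI : (a : ℝ≥0∞) + 1 < ∫⁻ ω, ENNReal.ofReal (X₀ ω * Real.log (X₀ ω) + 1) ∂P := by
    unfold entropyX at ha
    set p := ∫⁻ ω, ENNReal.ofReal (X₀ ω * Real.log (X₀ ω)) ∂P
    set q := ∫⁻ ω, ENNReal.ofReal (-(X₀ ω * Real.log (X₀ ω))) ∂P with hq
    have hqf : q ≠ ∞ := by
      refine ne_top_of_le_ne_top ENNReal.one_ne_top ?_
      calc q ≤ ∫⁻ _, 1 ∂P := by
            refine lintegral_mono fun ω => ?_
            rw [← ENNReal.ofReal_one]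
            exact ENNReal.ofReal_le_ofReal (by linarith [hlb ω])
        _ = 1 := by simp
    have key : (∫⁻ ω, ENNReal.ofReal (X₀ ω * Real.log (X₀ ω) + 1) ∂P) + q = p + 1 := by
      rw [hq, ← lintegral_add_left (by fun_prop)]
      have : p + 1 = ∫⁻ ω, (ENNReal.ofReal (X₀ ω * Real.log (X₀ ω)) + 1) ∂P := by
        rw [lintegral_add_right _ measurable_const]
        simp [p]
      rw [this]
      refine lintegral_congr fun ω => ?_
      have h := hlb ω
      set t := X₀ ω * Real.log (X₀ ω)
      rcases le_total 0 t with ht | ht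
      · rw [ENNReal.ofReal_of_nonpos (p := -t) (by linarith), add_zero,
          ENNReal.ofReal_add ht zero_le_one, ENNReal.ofReal_one]
      · rw [ENNReal.ofReal_of_nonpos (p := t) ht, zero_add,
          ← ENNReal.ofReal_add (by linarith) (by linarith)]
        simp
    have h1 : (a : ℝ≥0∞) + q < p := lt_tsub_iff_right.1 ha
    have h2 : (a : ℝ≥0∞) + q + 1 < p + 1 := ENNReal.add_lt_add_right ENNReal.one_ne_top h1
    rw [← key] at h2
    have h3 : ((a : ℝ≥0∞) + 1) + q
        < (∫⁻ ω, ENNReal.ofReal (X₀ ω * Real.log (X₀ ω) + 1) ∂P) + q := by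
      convert h2 using 1
      ring
    exact lt_of_add_lt_add_right h3
  let s : ℕ → ℝ := fun j => 1 / ((j : ℝ) + 2)
  have hs0 : ∀ j, 0 < s j := fun j => by positivity
  have hs1 : ∀ j, s j < 1 := fun j => by
    simp only [s]
    rw [div_lt_one (by positivity)]
    have : (0 : ℝ) ≤ j := Nat.cast_nonneg j
    linarith
  have hst : Tendsto s atTop (𝓝[≠] 0) := by
    refine tendsto_nhdsWithin_iff.2 ⟨?_, Eventually.of_forall fun j => (hs0 j).ne'⟩
    refine Tendsto.div_atTop tendsto_const_nhds ?_
    exact tendsto_atTop_add_const_right _ _ tendsto_natCast_atTop_atTop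
  have hfatou : ∫⁻ ω, ENNReal.ofReal (X₀ ω * Real.log (X₀ ω) + 1) ∂P
      ≤ liminf (fun j => ∫⁻ ω, ENNReal.ofReal
        ((s j)⁻¹ * (X₀ ω - X₀ ω ^ (1 - s j)) + 1) ∂P) atTop := by
    refine le_trans (le_of_eq ?_) (lintegral_liminf_le fun j => by fun_prop)
    refine lintegral_congr fun ω => ?_
    refine (Tendsto.liminf_eq ?_).symm
    refine ENNReal.tendsto_ofReal ?_
    exact ((rpow_sub_tendsto (hM.nonneg₀ ω)).comp hst).add_const 1
  obtain ⟨j, hj⟩ := (eventually_lt_of_lt_liminf (lt_of_lt_of_le hI hfatou)).exists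
  refine ⟨s j, hs0 j, hs1 j, ?_⟩
  have hint : Integrable (fun ω => X₀ ω ^ (1 - s j)) P := by
    refine Integrable.mono' ((integrable_X₀ hM).add (integrable_const 1))
      (hmX.pow_const _).aestronglyMeasurable (Eventually.of_forall fun ω => ?_)
    have hn := hM.nonneg₀ ω
    rw [Real.norm_of_nonneg (Real.rpow_nonneg hn _)]
    have h := Real.geom_mean_le_arith_mean2_weighted (w₁ := 1 - s j) (w₂ := s j)
      (p₁ := X₀ ω) (p₂ := 1)
      (by linarith [hs1 j]) (hs0 j).le hn zero_le_one (by ring)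
    rw [Real.one_rpow, mul_one, mul_one] at h
    simp only [Pi.add_apply]
    nlinarith [hs0 j, hs1 j]
  have hint1 : Integrable (fun ω => (s j)⁻¹ * (X₀ ω - X₀ ω ^ (1 - s j))) P :=
    ((integrable_X₀ hM).sub hint).const_mul _
  have hint2 : Integrable (fun ω => (s j)⁻¹ * (X₀ ω - X₀ ω ^ (1 - s j)) + 1) P :=
    hint1.add (integrable_const 1)
  rw [← ofReal_integral_eq_lintegral_ofReal hint2
    (Eventually.of_forall fun ω => rpow_sub_bound (hM.nonneg₀ ω) (hs0 j) (hs1 j))] at hj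
  rw [← ofReal_integral_eq_lintegral_ofReal hint
    (Eventually.of_forall fun ω => Real.rpow_nonneg (hM.nonneg₀ ω) _)]
  have he : ∫ ω, ((s j)⁻¹ * (X₀ ω - X₀ ω ^ (1 - s j)) + 1) ∂P
      = (s j)⁻¹ * (1 - ∫ ω, X₀ ω ^ (1 - s j) ∂P) + 1 := by
    rw [integral_add hint1 (integrable_const 1), integral_const_mul,
      integral_sub (integrable_X₀ hM) hint, hM.mean₀]
    simp
  rw [he] at hj
  have hj' : (a : ℝ) + 1 < (s j)⁻¹ * (1 - ∫ ω, X₀ ω ^ (1 - s j) ∂P) + 1 := by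
    have e1 : (a : ℝ≥0∞) + 1 = ENNReal.ofReal ((a : ℝ) + 1) := by
      rw [ENNReal.ofReal_add (NNReal.coe_nonneg a) zero_le_one]
      simp
    rw [e1] at hj
    exact (ENNReal.ofReal_lt_ofReal_iff_of_nonneg (by positivity)).1 hj
  have h5 : (a : ℝ) * s j < 1 - ∫ ω, X₀ ω ^ (1 - s j) ∂P := by
    have : (a : ℝ) < (s j)⁻¹ * (1 - ∫ ω, X₀ ω ^ (1 - s j) ∂P) := by linarith
    rw [inv_mul_eq_div, lt_div_iff₀ (hs0 j)] at this
    exact this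
  refine (ENNReal.ofReal_lt_ofReal_iff (Real.exp_pos _)).2 ?_
  have := Real.add_one_le_exp (-((a : ℝ) * s j))
  linarith

lemma exists_small_level (hM : CascadeM1 P X X₀) [IsProbabilityMeasure P]
    (ν : Measure (SymbSpace b)) [IsProbabilityMeasure ν] {x : SymbSpace b}
    (hx : lowerLocalDim ν x < entropyX P X₀)
    (hpos : ∀ k, 0 < (ν (_root_.cylinder (wordPrefix x k))).toReal)
    {K : ℝ} (hK : 0 < K) {ε : ℝ≥0∞} (hε : 0 < ε) :
    ∃ k, ∫⁻ ω in {ω | cascadeY X (wordPrefix x k) ω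
        * (ν (_root_.cylinder (wordPrefix x k))).toReal ≤ K},
      ENNReal.ofReal (cascadeY X (wordPrefix x k) ω) ∂P < ε := by
  obtain ⟨a, hxa, hah⟩ := ENNReal.lt_iff_exists_nnreal_btwn.1 hx
  obtain ⟨s, hs0, hs1, hs⟩ := exists_exponent hM hah
  set φ := ∫⁻ ω, ENNReal.ofReal (X₀ ω ^ (1 - s)) ∂P with hφ
  have hr : ENNReal.ofReal (Real.exp (a * s)) * φ < 1 := by
    calc ENNReal.ofReal (Real.exp (a * s)) * φ
        < ENNReal.ofReal (Real.exp (a * s)) * ENNReal.ofReal (Real.exp (-(a * s))) := by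
          refine ENNReal.mul_lt_mul_right ?_ ENNReal.ofReal_ne_top hs
          simpa using Real.exp_pos _
      _ = 1 := by
          rw [← ENNReal.ofReal_mul (Real.exp_pos _).le, ← Real.exp_add]
          simp
  have hlim : Tendsto (fun k : ℕ => ENNReal.ofReal (K ^ s)
      * (ENNReal.ofReal (Real.exp (a * s)) * φ) ^ k) atTop (𝓝 0) := by
    have := ENNReal.Tendsto.const_mul (ENNReal.tendsto_pow_atTop_nhds_zero_of_lt_one hr)
      (Or.inr (ENNReal.ofReal_ne_top (r := K ^ s)))
    simpa using this
  have hfreq := frequently_lt_of_liminf_lt (h := hxa)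
  obtain ⟨k, hk1, hk2, hk3⟩ := (hfreq.and_eventually
    ((hlim.eventually_lt_const hε).and (eventually_gt_atTop 0))).exists
  refine ⟨k, lt_of_le_of_lt ?_ hk2⟩
  set c := (ν (_root_.cylinder (wordPrefix x k))).toReal with hc
  have hcpos : 0 < c := hpos k
  have hkR : (0 : ℝ) < k := by exact_mod_cast hk3
  have hlog : -Real.log c / k < a := by
    by_contra hcon
    push Not at hcon
    have := ENNReal.ofReal_le_ofReal hcon
    rw [ENNReal.ofReal_coe_nnreal] at this
    exact absurd hk1 (not_lt.2 this)
  have hcexp : Real.exp (-(a * k)) ≤ c := by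
    rw [← Real.le_log_iff_exp_le hcpos]
    rw [div_lt_iff₀ hkR] at hlog
    linarith
  have hpt : ∀ ω, cascadeY X (wordPrefix x k) ω * c ≤ K →
      cascadeY X (wordPrefix x k) ω ≤
        K ^ s * Real.exp (a * s) ^ k * cascadeY X (wordPrefix x k) ω ^ (1 - s) := by
    intro ω hω
    have hy := cascadeY_nonneg hM (wordPrefix x k) ω
    set y := cascadeY X (wordPrefix x k) ω
    rcases hy.eq_or_lt with h0 | hy0
    · rw [← h0]
      positivity
    · have h1 : y ≤ K * Real.exp (a * k) := by
        have h2 : y * Real.exp (-(a * k)) ≤ K :=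
          (mul_le_mul_of_nonneg_left hcexp hy).trans hω
        rw [Real.exp_neg] at h2
        rwa [← div_eq_mul_inv, div_le_iff₀ (Real.exp_pos _)] at h2
      have h3 : y ^ s ≤ K ^ s * Real.exp (a * s) ^ k := by
        refine (Real.rpow_le_rpow hy h1 hs0.le).trans (le_of_eq ?_)
        rw [Real.mul_rpow hK.le (Real.exp_pos _).le, ← Real.exp_mul, ← Real.exp_nat_mul]
        congr 2
        ring
      calc y = y ^ s * y ^ (1 - s) := by
            rw [← Real.rpow_add hy0]
            simp
        _ ≤ _ := mul_le_mul_of_nonneg_right h3 (Real.rpow_nonneg hy _)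
  have hmeas : MeasurableSet {ω | cascadeY X (wordPrefix x k) ω * c ≤ K} :=
    measurableSet_le ((measurable_Y hM _).mul_const _) measurable_const
  calc _ ≤ ∫⁻ ω in {ω | cascadeY X (wordPrefix x k) ω * c ≤ K},
        ENNReal.ofReal (K ^ s * Real.exp (a * s) ^ k)
          * ENNReal.ofReal (cascadeY X (wordPrefix x k) ω ^ (1 - s)) ∂P := by
        refine setLIntegral_mono' hmeas fun ω hω => ?_
        rw [← ENNReal.ofReal_mul (by positivity)]
        exact ENNReal.ofReal_le_ofReal (hpt ω hω)
    _ ≤ ∫⁻ ω, ENNReal.ofReal (K ^ s * Real.exp (a * s) ^ k)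
          * ENNReal.ofReal (cascadeY X (wordPrefix x k) ω ^ (1 - s)) ∂P :=
        setLIntegral_le_lintegral _ _
    _ = ENNReal.ofReal (K ^ s) * (ENNReal.ofReal (Real.exp (a * s)) * φ) ^ k := by
        rw [lintegral_const_mul' _ _ ENNReal.ofReal_ne_top, lintegral_Y_pow hM,
          ENNReal.ofReal_mul (by positivity), ENNReal.ofReal_pow (Real.exp_pos _).le, mul_pow,
          mul_assoc]

lemma Y_mul_le_Z (hM : CascadeM1 P X X₀) (ν : Measure (SymbSpace b)) (x : SymbSpace b) (k : ℕ)
    (ω : Ω) :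
    cascadeY X (wordPrefix x k) ω * (ν (_root_.cylinder (wordPrefix x k))).toReal
      ≤ cascadeZ X ν k ω := by
  unfold cascadeZ
  exact Finset.single_le_sum (f := fun u : Fin k → Fin b =>
    cascadeY X (List.ofFn u) ω * (ν (_root_.cylinder (List.ofFn u))).toReal)
    (fun u _ => mul_nonneg (cascadeY_nonneg hM _ _) ENNReal.toReal_nonneg)
    (Finset.mem_univ (firstLetters k x))

lemma tendsto_zero_pointwise (hM : CascadeM1 P X X₀) [IsProbabilityMeasure P]
    (ν : Measure (SymbSpace b)) [IsProbabilityMeasure ν] {x : SymbSpace b}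
    (hx : lowerLocalDim ν x < entropyX P X₀)
    (hpos : ∀ k, 0 < (ν (_root_.cylinder (wordPrefix x k))).toReal)
    {K : ℝ} (hK : 0 < K) :
    Tendsto (fun n => ∫⁻ ω in {ω | ∀ k, cascadeZ X ν k ω ≤ K},
      ENNReal.ofReal (cascadeY X (wordPrefix x n) ω) ∂P) atTop (𝓝 0) := by
  rw [ENNReal.tendsto_nhds_zero]
  intro ε hε
  obtain ⟨k, hk⟩ := exists_small_level hM ν hx hpos hK hε
  filter_upwards [eventually_ge_atTop k] with n hn
  refine le_trans (lintegral_mono_set (fun ω hω => ?_)) ((setLIntegral_Y hM x hn ?_).trans_le hk.le)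
  · exact (Y_mul_le_Z hM ν x k ω).trans (hω k)
  · exact measurableSet_le ((measurable_Y_filt hM (wordPrefix_length x k).le).mul_const _)
      measurable_const

lemma ae_pos (ν : Measure (SymbSpace b)) [IsProbabilityMeasure ν] :
    ∀ᵐ x ∂ν, ∀ k, 0 < (ν (_root_.cylinder (wordPrefix x k))).toReal := by
  rw [ae_all_iff]
  intro k
  have h : ν (⋃ u ∈ {u : Fin k → Fin b | ν (_root_.cylinder (List.ofFn u)) = 0},
      _root_.cylinder (List.ofFn u)) = 0 :=
    (measure_biUnion_null_iff (Set.to_countable _)).2 fun u hu => hu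
  refine measure_mono_null (fun x hx => ?_) h
  have hx' : ν (_root_.cylinder (wordPrefix x k)) = 0 := by
    by_contra hne
    exact hx (ENNReal.toReal_pos hne (measure_ne_top _ _))
  refine Set.mem_biUnion (x := firstLetters k x) hx' ?_
  rw [cylinder_ofFn]
  rfl

lemma measurable_lowerLocalDim (ν : Measure (SymbSpace b)) : Measurable (lowerLocalDim ν) := by
  unfold lowerLocalDim
  exact Measurable.liminf fun n => measurable_comp_prefix
    (fun w => ENNReal.ofReal (-Real.log ((ν (_root_.cylinder w)).toReal) / n)) n

lemma ae_limit_zero (hM : CascadeM1 P X X₀) [IsProbabilityMeasure P]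
    (ν : Measure (SymbSpace b)) [IsProbabilityMeasure ν] :
    ∀ᵐ ω ∂P, Tendsto (fun n => cascadeZ X
      (ν.restrict {x | lowerLocalDim ν x < entropyX P X₀}) n ω) atTop (𝓝 0) := by
  set A := {x | lowerLocalDim ν x < entropyX P X₀} with hA
  have hAm : MeasurableSet A := measurableSet_lt (measurable_lowerLocalDim ν) measurable_const
  have hG : ∀ K : ℕ, ∀ᵐ ω ∂P, (∀ k, cascadeZ X ν k ω ≤ (K : ℝ) + 1) →
      liminf (fun n => ENNReal.ofReal (cascadeZ X (ν.restrict A) n ω)) atTop = 0 := by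
    intro K
    have hGm : MeasurableSet {ω | ∀ k, cascadeZ X ν k ω ≤ (K : ℝ) + 1} := by
      simp only [Set.ofPred_forall]
      exact MeasurableSet.iInter fun k => measurableSet_le (measurable_Z hM ν k) measurable_const
    set G := {ω | ∀ k, cascadeZ X ν k ω ≤ (K : ℝ) + 1} with hGdef
    have hlim : Tendsto (fun n => ∫⁻ ω in G,
        ENNReal.ofReal (cascadeZ X (ν.restrict A) n ω) ∂P) atTop (𝓝 0) := by
      simp_rw [setLIntegral_Z hM]
      have := tendsto_lintegral_of_dominated_convergence (μ := ν.restrict A)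
        (F := fun n x => ∫⁻ ω in G, ENNReal.ofReal (cascadeY X (wordPrefix x n) ω) ∂P)
        (f := fun _ => 0) (fun _ => 1)
        (fun n => measurable_comp_prefix
          (fun w => ∫⁻ ω in G, ENNReal.ofReal (cascadeY X w ω) ∂P) n)
        (fun n => Eventually.of_forall fun x =>
          (setLIntegral_le_lintegral _ _).trans (lintegral_Y hM x n).le)
        (by simp) ?_
      · simpa using this
      · filter_upwards [ae_restrict_mem hAm, ae_restrict_of_ae (ae_pos ν)] with x hxA hxpos
        exact tendsto_zero_pointwise hM ν hxA hxpos (by positivity)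
    have hzero : ∫⁻ ω in G,
        liminf (fun n => ENNReal.ofReal (cascadeZ X (ν.restrict A) n ω)) atTop ∂P = 0 := by
      refine le_antisymm ?_ zero_le
      refine (lintegral_liminf_le fun n => (measurable_Z hM _ n).ennreal_ofReal).trans ?_
      rw [hlim.liminf_eq]
    rw [lintegral_eq_zero_iff
      (Measurable.liminf fun n => (measurable_Z hM _ n).ennreal_ofReal)] at hzero
    exact (ae_restrict_iff' hGm).1 hzero
  filter_upwards [ae_all_iff.2 hG, ae_tendsto_Z hM ν, ae_tendsto_Z hM (ν.restrict A)]
    with ω h1 ⟨c, hc⟩ ⟨d, hd⟩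
  obtain ⟨B, hB⟩ := hc.bddAbove_range
  obtain ⟨K, hK⟩ := exists_nat_ge B
  have h2 := h1 K fun k => by
    have := hB (Set.mem_range_self k)
    linarith
  rw [(ENNReal.tendsto_ofReal hd).liminf_eq, ENNReal.ofReal_eq_zero] at h2
  have h3 : 0 ≤ d := ge_of_tendsto' hd fun n => cascadeZ_nonneg hM _ n ω
  rwa [le_antisymm h2 h3] at hd

lemma cascadeZ_add_compl (ν : Measure (SymbSpace b)) [IsProbabilityMeasure ν]
    {A : Set (SymbSpace b)} (hA : MeasurableSet A) (n : ℕ) (ω : Ω) :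
    cascadeZ X ν n ω = cascadeZ X (ν.restrict A) n ω + cascadeZ X (ν.restrict Aᶜ) n ω := by
  unfold cascadeZ
  rw [← Finset.sum_add_distrib]
  refine Finset.sum_congr rfl fun u _ => ?_
  rw [← mul_add, ← ENNReal.toReal_add (measure_ne_top _ _) (measure_ne_top _ _),
    ← Measure.add_apply, Measure.restrict_add_restrict_compl hA]

lemma abs_integral_le (hM : CascadeM1 P X X₀) [IsProbabilityMeasure P]
    (ν : Measure (SymbSpace b)) [IsProbabilityMeasure ν] :
    |∫ ω, cascadeZlim X ν ω ∂P| ≤ (ν {x | lowerLocalDim ν x < entropyX P X₀}ᶜ).toReal := by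
  have h0 := ae_limit_zero hM ν
  set A := {x | lowerLocalDim ν x < entropyX P X₀} with hA
  have hAm : MeasurableSet A := measurableSet_lt (measurable_lowerLocalDim ν) measurable_const
  have hae : ∀ᵐ ω ∂P, ENNReal.ofReal ‖cascadeZlim X ν ω‖
      = liminf (fun n => ENNReal.ofReal (cascadeZ X (ν.restrict Aᶜ) n ω)) atTop := by
    filter_upwards [h0, ae_tendsto_Z hM (ν.restrict Aᶜ)] with ω h1 ⟨c, hc⟩
    have h2 : Tendsto (fun n => cascadeZ X ν n ω) atTop (𝓝 c) := by
      have := h1.add hc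
      rw [zero_add] at this
      exact this.congr fun n => (cascadeZ_add_compl ν hAm n ω).symm
    have h3 : 0 ≤ c := ge_of_tendsto' hc fun n => cascadeZ_nonneg hM _ n ω
    rw [(ENNReal.tendsto_ofReal hc).liminf_eq, cascadeZlim, h2.limsup_eq, Real.norm_of_nonneg h3]
  refine (norm_integral_le_lintegral_norm (cascadeZlim X ν)).trans ?_
  refine ENNReal.toReal_mono (measure_ne_top _ _) ?_
  rw [lintegral_congr_ae hae]
  refine (lintegral_liminf_le fun n => (measurable_Z hM _ n).ennreal_ofReal).trans ?_
  simp_rw [lintegral_Z hM]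
  simp

end CascadeAux

/-- **Theorem.** Let `Q` be a Mandelbrot multiplicative cascade (assumption (M1)) acting on
a Borel probability measure `ν` on `Σ`, and let
`Σ⁻_{h_X,ν} = {x : lower local dimension of ν at x < h_X}`. If `ν(Σ⁻_{h_X,ν}) > 0` then
`E_ℙ(Z) < 1`, and if `ν(Σ⁻_{h_X,ν}) = 1` then `E_ℙ(Z) = 0`. -/
theorem deficient_mass_of_subcritical_set
    {b : ℕ} (hb : 2 ≤ b)
    {Ω : Type*} [MeasurableSpace Ω] (P : Measure Ω) [IsProbabilityMeasure P]
    (X : List (Fin b) → Ω → ℝ) (X₀ : Ω → ℝ)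
    (hM1 : CascadeM1 P X X₀)
    (ν : Measure (SymbSpace b)) [IsProbabilityMeasure ν] :
    (0 < ν {x | lowerLocalDim ν x < entropyX P X₀} →
      ∫ ω, cascadeZlim X ν ω ∂P < 1) ∧
    (ν {x | lowerLocalDim ν x < entropyX P X₀} = 1 →
      ∫ ω, cascadeZlim X ν ω ∂P = 0) := by
  have key := abs_integral_le hM1 ν
  have hAm : MeasurableSet {x | lowerLocalDim ν x < entropyX P X₀} :=
    measurableSet_lt (measurable_lowerLocalDim ν) measurable_const
  rw [prob_compl_eq_one_sub hAm] at key
  constructor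
  · intro h
    refine lt_of_le_of_lt ((le_abs_self _).trans key) ?_
    rw [← ENNReal.toReal_one]
    refine (ENNReal.toReal_lt_toReal (by simp) (by simp)).2 ?_
    exact ENNReal.sub_lt_self ENNReal.one_ne_top one_ne_zero h.ne'
  · intro h
    rw [h] at key
    simpa using key

end
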